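/- For all positive integers N and n ≥ 2: if every red/blue edge-coloring of Γ_{N,N} contains a red rectangle or a blue K_n, then every 2-coloring of K_{2N}^(3) contains a red copy of K_4^(3) or a blue copy of S_n. Consequently, r(K_4^(3), S_n) ≤ 2·gr(Γ_{2,2}, K_n). -/

import Mathlib

/-- Adjacency in the grid graph `K_m □ K_n`. -/
def GridAdj {m n : ℕ} (p q : Fin m × Fin n) : Prop :=
  (p.1 = q.1 ∧ p.2 ≠ q.2) ∨ (p.1 ≠ q.1 ∧ p.2 = q.2)

/-- A red rectangle in an edge-coloring of `Γ_{N,N}` (red = `true`). -/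
def HasRedRect (N : ℕ) (χ : Sym2 (Fin N × Fin N) → Bool) : Prop :=
  ∃ x x' y y' : Fin N, x ≠ x' ∧ y ≠ y' ∧
    χ s((x, y), (x', y)) = true ∧ χ s((x, y'), (x', y')) = true ∧
    χ s((x, y), (x, y')) = true ∧ χ s((x', y), (x', y')) = true

/-- A blue `K_n` in an edge-coloring of `Γ_{N,N}` (blue = `false`). -/
def HasBlueGridClique (N n : ℕ) (χ : Sym2 (Fin N × Fin N) → Bool) : Prop :=
  ∃ S : Finset (Fin N × Fin N), S.card = n ∧
    ∀ p ∈ S, ∀ q ∈ S, p ≠ q → GridAdj p q ∧ χ s(p, q) = false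

/-- A red copy of `K_s^(3)` in a 2-coloring of `K_N^(3)` (red = `true`). -/
def HasRedClique3 (N s : ℕ) (χ : Finset (Fin N) → Bool) : Prop :=
  ∃ S : Finset (Fin N), S.card = s ∧ ∀ T ⊆ S, T.card = 3 → χ T = true

/-- A blue copy of the star `Sₙ` (blue = `false`). -/
def HasBlueStar (N n : ℕ) (χ : Finset (Fin N) → Bool) : Prop :=
  ∃ v : Fin N, ∃ S : Finset (Fin N), v ∉ S ∧ S.card = n ∧
    ∀ a ∈ S, ∀ b ∈ S, a ≠ b → χ {v, a, b} = false

/-- The Ramsey number `r(K₄⁽³⁾, Sₙ)`. -/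
noncomputable def ramseyK4Star (n : ℕ) : ℕ :=
  sInf {N : ℕ | ∀ χ : Finset (Fin N) → Bool, HasRedClique3 N 4 χ ∨ HasBlueStar N n χ}

/-- The grid Ramsey number `gr(Γ₂,₂, K_n)`. -/
noncomputable def gridRamsey22 (n : ℕ) : ℕ :=
  sInf {N : ℕ | ∀ χ : Sym2 (Fin N × Fin N) → Bool,
    HasRedRect N χ ∨ HasBlueGridClique N n χ}

lemma aux_ramsey {α : Type} [DecidableEq α] (c : α → α → Bool) (hc : ∀ a b, c a b = c b a) :
    ∀ k s t : ℕ, s + t = k → ∀ W : Finset α, 2 ^ k ≤ W.card →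
      (∃ S ⊆ W, S.card = s ∧ ∀ a ∈ S, ∀ b ∈ S, a ≠ b → c a b = true) ∨
      (∃ S ⊆ W, S.card = t ∧ ∀ a ∈ S, ∀ b ∈ S, a ≠ b → c a b = false) := by
  intro k
  induction k with
  | zero =>
    intro s t h W _
    left
    exact ⟨∅, by simp, by simp; omega, by simp⟩
  | succ k ih =>
    intro s t h W hW
    rcases Nat.eq_zero_or_pos s with rfl | hs
    · left
      exact ⟨∅, by simp, by simp, by simp⟩
    rcases Nat.eq_zero_or_pos t with rfl | ht
    · right
      exact ⟨∅, by simp, by simp, by simp⟩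
    have hpos : 0 < 2 ^ k := by positivity
    have hpow : 2 ^ (k + 1) = 2 * 2 ^ k := by ring
    obtain ⟨v, hv⟩ : W.Nonempty := Finset.card_pos.mp (by omega)
    have hcard : (W.erase v).card + 1 = W.card := Finset.card_erase_add_one hv
    have hsplit := Finset.card_filter_add_card_filter_not (s := W.erase v) (fun a => c v a = true)
    have hcase : 2 ^ k ≤ ((W.erase v).filter (fun a => c v a = true)).card ∨
        2 ^ k ≤ ((W.erase v).filter (fun a => ¬ c v a = true)).card := by omega
    rcases hcase with h1 | h1
    · rcases ih (s - 1) t (by omega) _ h1 with ⟨S, hS, hSc, hSr⟩ | ⟨S, hS, hSc, hSr⟩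
      · left
        have hvS : v ∉ S := fun hvS => by simpa using hS hvS
        refine ⟨insert v S, ?_, ?_, ?_⟩
        · intro a ha
          rcases Finset.mem_insert.mp ha with rfl | ha
          · exact hv
          · have := hS ha
            simp at this
            exact this.1.2
        · rw [Finset.card_insert_of_notMem hvS]; omega
        · intro a ha b hb hab
          rcases Finset.mem_insert.mp ha with ea | ha' <;>
          rcases Finset.mem_insert.mp hb with eb | hb'
          · exact absurd (ea.trans eb.symm) hab
          · have := hS hb'
            simp at this
            rw [ea]
            exact this.2
          · have := hS ha'
            simp at this
            rw [hc, eb]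
            exact this.2
          · exact hSr a ha' b hb' hab
      · right
        refine ⟨S, fun a ha => ?_, hSc, hSr⟩
        have := hS ha
        simp at this
        exact this.1.2
    · rcases ih s (t - 1) (by omega) _ h1 with ⟨S, hS, hSc, hSr⟩ | ⟨S, hS, hSc, hSr⟩
      · left
        refine ⟨S, fun a ha => ?_, hSc, hSr⟩
        have := hS ha
        simp at this
        exact this.1.2
      · right
        have hvS : v ∉ S := fun hvS => by simpa using hS hvS
        refine ⟨insert v S, ?_, ?_, ?_⟩
        · intro a ha
          rcases Finset.mem_insert.mp ha with rfl | ha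
          · exact hv
          · have := hS ha
            simp at this
            exact this.1.2
        · rw [Finset.card_insert_of_notMem hvS]; omega
        · intro a ha b hb hab
          rcases Finset.mem_insert.mp ha with ea | ha' <;>
          rcases Finset.mem_insert.mp hb with eb | hb'
          · exact absurd (ea.trans eb.symm) hab
          · have := hS hb'
            simp at this
            rw [ea]
            exact this.2
          · have := hS ha'
            simp at this
            rw [hc, eb]
            exact this.2
          · exact hSr a ha' b hb' hab

lemma aux_row {N n : ℕ} {χ : Sym2 (Fin N × Fin N) → Bool} (h : ¬ HasBlueGridClique N n χ)
    (S : Finset (Fin N)) (hS : S.card = n) (y : Fin N) :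
    ∃ a ∈ S, ∃ b ∈ S, a ≠ b ∧ χ s((a, y), (b, y)) = true := by
  by_contra! hcon
  apply h
  refine ⟨S.image (fun a => (a, y)), ?_, ?_⟩
  · rw [Finset.card_image_of_injective _ (fun a b hab => by simpa using hab), hS]
  · intro p hp q hq hpq
    obtain ⟨a, ha, rfl⟩ := Finset.mem_image.mp hp
    obtain ⟨b, hb, rfl⟩ := Finset.mem_image.mp hq
    have hab : a ≠ b := fun e => hpq (by rw [e])
    exact ⟨Or.inr ⟨hab, rfl⟩, by simpa using hcon a ha b hb hab⟩

lemma aux_col {N n : ℕ} {χ : Sym2 (Fin N × Fin N) → Bool} (h : ¬ HasBlueGridClique N n χ)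
    (S : Finset (Fin N)) (hS : S.card = n) (x : Fin N) :
    ∃ a ∈ S, ∃ b ∈ S, a ≠ b ∧ χ s((x, a), (x, b)) = true := by
  by_contra! hcon
  apply h
  refine ⟨S.image (fun a => (x, a)), ?_, ?_⟩
  · rw [Finset.card_image_of_injective _ (fun a b hab => by simpa using hab), hS]
  · intro p hp q hq hpq
    obtain ⟨a, ha, rfl⟩ := Finset.mem_image.mp hp
    obtain ⟨b, hb, rfl⟩ := Finset.mem_image.mp hq
    have hab : a ≠ b := fun e => hpq (by rw [e])
    exact ⟨Or.inl ⟨rfl, hab⟩, by simpa using hcon a ha b hb hab⟩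

lemma aux_grid_finite (n : ℕ) (hn : 2 ≤ n) :
    ∃ N : ℕ, ∀ χ : Sym2 (Fin N × Fin N) → Bool, HasRedRect N χ ∨ HasBlueGridClique N n χ := by
  refine ⟨n * n * 2 ^ (n + n), fun χ => ?_⟩
  by_contra! hcon
  obtain ⟨hR, hB⟩ := hcon
  have hle : n ≤ n * n * 2 ^ (n + n) := by
    have : 0 < 2 ^ (n + n) := by positivity
    nlinarith [Nat.mul_le_mul_left (n * n) this]
  have key : ∀ y, ∃ p : Fin n × Fin n, p.1 ≠ p.2 ∧
      χ s((Fin.castLE hle p.1, y), (Fin.castLE hle p.2, y)) = true := by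
    intro y
    obtain ⟨a, ha, b, hb, hab, hr⟩ := aux_row hB (Finset.univ.image (Fin.castLE hle))
      (by rw [Finset.card_image_of_injective _ (Fin.castLE_injective hle)]; simp) y
    obtain ⟨i, _, rfl⟩ := Finset.mem_image.mp ha
    obtain ⟨j, _, rfl⟩ := Finset.mem_image.mp hb
    exact ⟨(i, j), fun e => hab (by simpa using e), hr⟩
  choose f hf hfr using key
  haveI : Nonempty (Fin n) := ⟨⟨0, by omega⟩⟩
  obtain ⟨p, hp⟩ := Fintype.exists_le_card_fiber_of_mul_le_card f (n := 2 ^ (n + n)) (by simp)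
  set x := Fin.castLE hle p.1 with hx
  set x' := Fin.castLE hle p.2 with hx'
  rcases aux_ramsey (fun a b => χ s((x, a), (x, b))) (fun a b => by rw [Sym2.eq_swap])
      (n + n) n n rfl _ hp with ⟨S, hS, hSc, hSr⟩ | ⟨S, hS, hSc, hSr⟩
  · obtain ⟨a, ha, b, hb, hab, hr⟩ := aux_col hB S hSc x'
    have hfa : f a = p := by simpa using hS ha
    have hfb : f b = p := by simpa using hS hb
    apply hR
    refine ⟨x, x', a, b, ?_, hab, ?_, ?_, hSr a ha b hb hab, hr⟩
    · intro e
      apply hf a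
      rw [hfa]
      exact Fin.castLE_injective hle e
    · have := hfr a
      rwa [hfa] at this
    · have := hfr b
      rwa [hfb] at this
  · obtain ⟨a, ha, b, hb, hab, hr⟩ := aux_col hB S hSc x
    have := hSr a ha b hb hab
    rw [this] at hr
    exact absurd hr (by simp)

lemma aux_first (N n : ℕ) (hn : 2 ≤ n)
    (h : ∀ χ : Sym2 (Fin N × Fin N) → Bool, HasRedRect N χ ∨ HasBlueGridClique N n χ)
    (χ : Finset (Fin (2 * N)) → Bool) :
    HasRedClique3 (2 * N) 4 χ ∨ HasBlueStar (2 * N) n χ := by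
  let L : Fin N → Fin (2 * N) := fun i => ⟨i, by omega⟩
  let R : Fin N → Fin (2 * N) := fun i => ⟨N + i, by omega⟩
  have hL : Function.Injective L := fun a b hab => by
    simp only [L, Fin.mk.injEq] at hab
    exact Fin.ext hab
  have hRi : Function.Injective R := fun a b hab => by
    simp only [R, Fin.mk.injEq] at hab
    exact Fin.ext (by omega)
  have hLR : ∀ a b, L a ≠ R b := fun a b hab => by
    simp only [L, R, Fin.mk.injEq] at hab
    omega
  let g : Sym2 (Fin N × Fin N) → Bool := fun e =>
    χ (e.toFinset.image (fun p => L p.1) ∪ e.toFinset.image (fun p => R p.2))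
  have g1 : ∀ x x' y, g s((x, y), (x', y)) = χ {R y, L x, L x'} := by
    intro x x' y
    simp only [g]
    congr 1
    ext a
    simp
    grind
  have g2 : ∀ x y y', g s((x, y), (x, y')) = χ {L x, R y, R y'} := by
    intro x y y'
    simp only [g]
    congr 1
    ext a
    simp
    grind
  clear_value g L R
  rcases h g with ⟨x, x', y, y', hx, hy, e1, e2, e3, e4⟩ | ⟨S, hS, hSb⟩
  · left
    rw [g1] at e1 e2
    rw [g2] at e3 e4
    have hxx := hL.ne hx
    have hyy := hRi.ne hy
    have a1 := hLR x y
    have a2 := hLR x y'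
    have a3 := hLR x' y
    have a4 := hLR x' y'
    have hc : ({L x, L x', R y, R y'} : Finset (Fin (2 * N))).card = 4 := by
      rw [Finset.card_insert_of_notMem (by simp; grind),
        Finset.card_insert_of_notMem (by simp; grind), Finset.card_pair hyy]
    refine ⟨{L x, L x', R y, R y'}, hc, ?_⟩
    intro T hT hT3
    obtain ⟨z, hz, hzT⟩ : ∃ z ∈ ({L x, L x', R y, R y'} : Finset (Fin (2 * N))), z ∉ T := by
      by_contra! hcon
      have := Finset.card_le_card (show _ ⊆ T from hcon)
      omega
    have hTe : T = ({L x, L x', R y, R y'} : Finset (Fin (2 * N))).erase z := by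
      apply Finset.eq_of_subset_of_card_le
      · intro a ha
        exact Finset.mem_erase.mpr ⟨fun e => hzT (e ▸ ha), hT ha⟩
      · rw [Finset.card_erase_of_mem hz, hc, hT3]
    rw [hTe]
    simp only [Finset.mem_insert, Finset.mem_singleton] at hz
    rcases hz with rfl | rfl | rfl | rfl
    · rw [← e4]; congr 1; ext a; simp; grind
    · rw [← e3]; congr 1; ext a; simp; grind
    · rw [← e2]; congr 1; ext a; simp; grind
    · rw [← e1]; congr 1; ext a; simp; grind
  · right
    obtain ⟨p, hp, q, hq, hpq⟩ := Finset.one_lt_card.mp (show 1 < S.card by omega)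
    rcases (hSb p hp q hq hpq).1 with ⟨h1, h2⟩ | ⟨h1, h2⟩
    · have hall : ∀ r ∈ S, r.1 = p.1 := by
        intro r hr
        by_contra hne
        have i1 : r ≠ p := fun e => hne (by rw [e])
        have i2 : r ≠ q := fun e => hne (by rw [e, h1])
        have j1 := (hSb r hr p hp i1).1
        have j2 := (hSb r hr q hq i2).1
        unfold GridAdj at j1 j2
        grind
      refine ⟨L p.1, S.image (fun r => R r.2), ?_, ?_, ?_⟩
      · simp only [Finset.mem_image, not_exists, not_and]
        intro r _ e
        exact hLR _ _ e.symm
      · rw [Finset.card_image_of_injOn, hS]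
        intro a ha b hb hab
        exact Prod.ext ((hall a ha).trans (hall b hb).symm) (hRi hab)
      · intro a ha b hb hab
        obtain ⟨u, hu, rfl⟩ := Finset.mem_image.mp ha
        obtain ⟨v, hv, rfl⟩ := Finset.mem_image.mp hb
        have := (hSb u hu v hv (fun e => hab (by rw [e]))).2
        rw [← g2, ← this]
        congr 1
        rw [show u = (p.1, u.2) from Prod.ext (hall u hu) rfl,
          show v = (p.1, v.2) from Prod.ext (hall v hv) rfl]
    · have hall : ∀ r ∈ S, r.2 = p.2 := by
        intro r hr
        by_contra hne
        have i1 : r ≠ p := fun e => hne (by rw [e])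
        have i2 : r ≠ q := fun e => hne (by rw [e, h2])
        have j1 := (hSb r hr p hp i1).1
        have j2 := (hSb r hr q hq i2).1
        unfold GridAdj at j1 j2
        grind
      refine ⟨R p.2, S.image (fun r => L r.1), ?_, ?_, ?_⟩
      · simp only [Finset.mem_image, not_exists, not_and]
        intro r _ e
        exact hLR _ _ e
      · rw [Finset.card_image_of_injOn, hS]
        intro a ha b hb hab
        exact Prod.ext (hL hab) ((hall a ha).trans (hall b hb).symm)
      · intro a ha b hb hab
        obtain ⟨u, hu, rfl⟩ := Finset.mem_image.mp ha
        obtain ⟨v, hv, rfl⟩ := Finset.mem_image.mp hb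
        have := (hSb u hu v hv (fun e => hab (by rw [e]))).2
        rw [← g1, ← this]
        congr 1
        rw [show u = (u.1, p.2) from Prod.ext rfl (hall u hu),
          show v = (v.1, p.2) from Prod.ext rfl (hall v hv)]

/-- For all positive `N` and `n ≥ 2`: if every red/blue edge-coloring of `Γ_{N,N}`
contains a red rectangle or a blue `K_n`, then every 2-coloring of `K_{2N}^(3)` contains
a red `K₄⁽³⁾` or a blue `Sₙ`. Consequently, `r(K₄⁽³⁾, Sₙ) ≤ 2 · gr(Γ₂,₂, K_n)`. -/
theorem ramsey_le_two_gridRamsey (N n : ℕ) (hN : 0 < N) (hn : 2 ≤ n) :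
    ((∀ χ : Sym2 (Fin N × Fin N) → Bool, HasRedRect N χ ∨ HasBlueGridClique N n χ) →
      ∀ χ : Finset (Fin (2 * N)) → Bool,
        HasRedClique3 (2 * N) 4 χ ∨ HasBlueStar (2 * N) n χ) ∧
    ramseyK4Star n ≤ 2 * gridRamsey22 n := by
  refine ⟨fun h χ => aux_first N n hn h χ, ?_⟩
  apply Nat.sInf_le
  exact fun χ => aux_first _ n hn (Nat.sInf_mem (aux_grid_finite n hn)) χ
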